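/- arXiv:2006.03801 — 5 statements merged into one kernel-verified Lean document; each statement's English description precedes it below -/
import Mathlib

section
/- For every n ≥ 3 with n ≡ 1 (mod 4) or n ≡ 2 (mod 4), the cycle C_n on n vertices is not graceful. -/
/-- The induced edge label `|φ(u) − φ(v)|` of an edge, as a function on `Sym2 V`. -/
def edgeLabel {V : Type*} (φ : V → ℕ) : Sym2 V → ℕ :=
  Sym2.lift ⟨fun u v => Nat.dist (φ u) (φ v), fun u v => Nat.dist_comm (φ u) (φ v)⟩

/-- `φ` is a graceful labeling of the graph `G` with `q` edges: it is injective,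
takes values in `{0, 1, ..., q}`, and the induced edge labels `|φ(u) − φ(v)|`
form exactly the set `{1, 2, ..., q}`, each value occurring once. -/
def IsGracefulLabeling {V : Type*} (G : SimpleGraph V) (φ : V → ℕ) : Prop :=
  Function.Injective φ ∧
  (∀ v, φ v ≤ Nat.card G.edgeSet) ∧
  Set.InjOn (edgeLabel φ) G.edgeSet ∧
  edgeLabel φ '' G.edgeSet = Set.Icc 1 (Nat.card G.edgeSet)

/-- A graph is graceful if it admits a graceful labeling. -/
def IsGraceful {V : Type*} (G : SimpleGraph V) : Prop :=
  ∃ φ : V → ℕ, IsGracefulLabeling G φ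

/-! Modulo 2 the label `|φ u − φ v|` of an edge is `φ u + φ v`, so the sum of all the edge labels is
congruent to `∑ v, deg v * φ v`, which is even when every degree is even. In a graceful labeling
this sum is `1 + 2 + ⋯ + q`, which is odd exactly when `q ≡ 1` or `2 (mod 4)`. This is Rosa's parity
condition for graphs with all degrees even, of which cycles are the simplest case. -/

theorem odd_sum_Icc_one_iff (n : ℕ) :
    Odd (∑ k ∈ Finset.Icc 1 n, k) ↔ n % 4 = 1 ∨ n % 4 = 2 := by
  induction n with
  | zero => simp
  | succ n ih =>
    rw [Finset.sum_Icc_succ_top (Nat.le_add_left 1 n), Nat.odd_add, ih, Nat.even_iff]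
    omega

theorem dist_modEq_add (a b : ℕ) : Nat.dist a b ≡ a + b [MOD 2] := by
  rw [Nat.ModEq, Nat.dist]
  omega

theorem sum_edgeFinset_sum_toFinset {V M : Type*} [Fintype V] [DecidableEq V] [AddCommMonoid M]
    (G : SimpleGraph V) [Fintype G.edgeSet] [G.LocallyFinite] (f : V → M) :
    ∑ e ∈ G.edgeFinset, ∑ v ∈ e.toFinset, f v = ∑ v, G.degree v • f v := by
  calc ∑ e ∈ G.edgeFinset, ∑ v ∈ e.toFinset, f v
      = ∑ v, ∑ _e ∈ G.incidenceFinset v, f v :=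
        Finset.sum_comm' fun e v => by simp [SimpleGraph.incidenceSet]
    _ = ∑ v, G.degree v • f v := by
        simp only [Finset.sum_const, SimpleGraph.card_incidenceFinset_eq_degree]

theorem edgeLabel_modEq_sum_toFinset {V : Type*} [DecidableEq V] (φ : V → ℕ) {e : Sym2 V}
    (he : ¬ e.IsDiag) : edgeLabel φ e ≡ ∑ v ∈ e.toFinset, φ v [MOD 2] := by
  induction e with
  | _ u v =>
    rw [Sym2.toFinset_mk_eq, Finset.sum_pair (by simpa using he)]
    exact dist_modEq_add (φ u) (φ v)

theorem even_sum_edgeLabel {V : Type*} [Finite V] {G : SimpleGraph V} [Fintype G.edgeSet]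
    [G.LocallyFinite] (hdeg : ∀ v, Even (G.degree v)) (φ : V → ℕ) :
    Even (∑ e ∈ G.edgeFinset, edgeLabel φ e) := by
  classical
  have := Fintype.ofFinite V
  have hmod : ∑ e ∈ G.edgeFinset, edgeLabel φ e ≡ ∑ v, G.degree v • φ v [MOD 2] := by
    rw [← sum_edgeFinset_sum_toFinset]
    exact Nat.ModEq.sum fun e he => edgeLabel_modEq_sum_toFinset φ <|
      G.not_isDiag_of_mem_edgeFinset he
  have heven : Even (∑ v, G.degree v • φ v) :=
    Finset.even_sum _ fun v _ => (hdeg v).mul_right (φ v)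
  exact Nat.even_iff.mpr (Eq.trans hmod (Nat.even_iff.mp heven))

namespace IsGracefulLabeling

variable {V : Type*} {G : SimpleGraph V} {φ : V → ℕ}

theorem finite (hφ : IsGracefulLabeling G φ) : Finite V := by
  obtain ⟨hinj, hle, -⟩ := hφ
  have : Finite (Set.range φ) := (Set.finite_Iic _).subset (Set.range_subset_iff.mpr hle)
  exact .of_injective_finite_range hinj

theorem sum_edgeLabel [Fintype G.edgeSet] (hφ : IsGracefulLabeling G φ) :
    ∑ e ∈ G.edgeFinset, edgeLabel φ e = ∑ k ∈ Finset.Icc 1 (Nat.card G.edgeSet), k := by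
  obtain ⟨-, -, hinj, himage⟩ := hφ
  have hbij : Set.BijOn (edgeLabel φ) G.edgeFinset (Finset.Icc 1 (Nat.card G.edgeSet)) := by
    rw [SimpleGraph.coe_edgeFinset, Finset.coe_Icc, ← himage]
    exact hinj.bijOn_image
  exact Finset.sum_nbij (edgeLabel φ) hbij.mapsTo hbij.injOn hbij.surjOn fun _ _ => rfl

end IsGracefulLabeling

theorem cycleGraph_not_graceful_general {V : Type*} {G : SimpleGraph V} [G.LocallyFinite]
    (hdeg : ∀ v, Even (G.degree v))
    (hcard : Nat.card G.edgeSet % 4 = 1 ∨ Nat.card G.edgeSet % 4 = 2) : ¬ IsGraceful G := by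
  rintro ⟨φ, hφ⟩
  have := hφ.finite
  have := Fintype.ofFinite V
  have := Fintype.ofFinite G.edgeSet
  have hodd : Odd (∑ e ∈ G.edgeFinset, edgeLabel φ e) :=
    hφ.sum_edgeLabel ▸ (odd_sum_Icc_one_iff _).mpr hcard
  exact Nat.not_even_iff_odd.mpr hodd (even_sum_edgeLabel hdeg φ)

theorem cycleGraph_degree {n : ℕ} (hn : 3 ≤ n) (v : Fin n) :
    (SimpleGraph.cycleGraph n).degree v = 2 := by
  obtain ⟨m, rfl⟩ := Nat.exists_eq_add_of_le' hn
  exact SimpleGraph.cycleGraph_degree_three_le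

theorem card_edgeSet_cycleGraph {n : ℕ} (hn : 3 ≤ n) :
    Nat.card (SimpleGraph.cycleGraph n).edgeSet = n := by
  have hsum := (SimpleGraph.cycleGraph n).sum_degrees_eq_twice_card_edges
  simp only [cycleGraph_degree hn, Finset.sum_const, Finset.card_univ, Fintype.card_fin,
    smul_eq_mul] at hsum
  rw [Nat.card_eq_fintype_card, ← SimpleGraph.edgeFinset_card]
  omega

/-- For `n ≥ 3` with `n ≡ 1` or `2 (mod 4)`, the cycle `C_n` is not graceful. -/
theorem cycleGraph_not_graceful (n : ℕ) (hn : 3 ≤ n)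
    (h : n % 4 = 1 ∨ n % 4 = 2) :
    ¬ IsGraceful (SimpleGraph.cycleGraph n) :=
  cycleGraph_not_graceful_general (fun v => cycleGraph_degree hn v ▸ even_two)
    (by rwa [card_edgeSet_cycleGraph hn])
end

section
/- Every finite simple graph G can be embedded into a graceful graph as an induced subgraph; that is, for every finite simple graph G there exists a graceful graph H containing an induced subgraph isomorphic to G. -/
/-!
A graph on `{0, ..., N}` whose edges have pairwise distinct labels becomes graceful after joining
`0` to every label `d` that does not yet occur: that edge has label `d`. The new edges all meet
`0`, so a copy of `G` avoiding `0` stays induced. Placing the vertices of `G` at distinct powers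
of two makes all differences distinct, because for `i < j` the difference `2 ^ j - 2 ^ i` has binary
logarithm `j - 1` and hence determines `j`, then `i`.
-/

section EdgeLabel

variable {V W : Type*}

theorem edgeLabel_comp (φ : W → ℕ) (f : V → W) :
    edgeLabel (φ ∘ f) = edgeLabel φ ∘ Sym2.map f :=
  funext <| Sym2.ind fun _ _ => rfl

theorem edgeLabel_eq_sub_of_monotone [LinearOrder V] {φ : V → ℕ} (hφ : Monotone φ) (s : Sym2 V) :
    edgeLabel φ s = φ s.sup - φ s.inf := by
  induction s with | _ u v
  rw [Sym2.sup_mk, Sym2.inf_mk, hφ.map_sup, hφ.map_inf]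
  exact Nat.dist_eq_max_sub_min

theorem mapsTo_edgeLabel_Icc {φ : V → ℕ} {q : ℕ} (hφ : Function.Injective φ)
    (hle : ∀ v, φ v ≤ q) (G : SimpleGraph V) :
    Set.MapsTo (edgeLabel φ) G.edgeSet (Set.Icc 1 q) := by
  intro s hs
  induction s with | _ u v
  have hne : φ u ≠ φ v := hφ.ne (G.ne_of_adj hs)
  refine ⟨Nat.dist_pos_of_ne hne, ?_⟩
  exact Nat.dist_eq_max_sub_min.trans_le <| (Nat.sub_le _ _).trans <| max_le (hle u) (hle v)

theorem isGracefulLabeling_of_bijOn {G : SimpleGraph V} {φ : V → ℕ} {q : ℕ}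
    (hφ : Function.Injective φ) (hle : ∀ v, φ v ≤ q)
    (hbij : Set.BijOn (edgeLabel φ) G.edgeSet (Set.Icc 1 q)) : IsGracefulLabeling G φ := by
  have hcard : Nat.card G.edgeSet = q := by
    rw [Nat.card_coe_set_eq, hbij.ncard_eq, Set.ncard_Icc_nat, Nat.add_sub_cancel]
  rw [IsGracefulLabeling, hcard]
  exact ⟨hφ, hle, hbij.injOn, hbij.image_eq⟩

end EdgeLabel

section StarCompletion

variable {V : Type*} {N : ℕ}

/-- The completion of a graph `K` on the labels `{0, ..., N}` obtained by joining `0` to every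
nonzero label that is not an edge label of `K`. The edges at `0` are selected by their own label,
since `s(0, d)` has label `d`; the loop `s(0, 0)` is discarded by `SimpleGraph.fromEdgeSet`. -/
def starCompletion (K : SimpleGraph (Fin (N + 1))) : SimpleGraph (Fin (N + 1)) :=
  K ⊔ SimpleGraph.fromEdgeSet {s | 0 ∈ s ∧ edgeLabel Fin.val s ∉ edgeLabel Fin.val '' K.edgeSet}

theorem edgeSet_starCompletion (K : SimpleGraph (Fin (N + 1))) :
    (starCompletion K).edgeSet = K.edgeSet ∪
      {s | 0 ∈ s ∧ edgeLabel Fin.val s ∉ edgeLabel Fin.val '' K.edgeSet} \ Sym2.diagSet := by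
  rw [starCompletion, SimpleGraph.edgeSet_sup, SimpleGraph.edgeSet_fromEdgeSet]

theorem starCompletion_adj_iff (K : SimpleGraph (Fin (N + 1))) {a b : Fin (N + 1)}
    (ha : a ≠ 0) (hb : b ≠ 0) : (starCompletion K).Adj a b ↔ K.Adj a b := by
  simp [starCompletion, ha.symm, hb.symm]

theorem edgeLabel_val_zero_mk (a : Fin (N + 1)) : edgeLabel Fin.val s(0, a) = a :=
  Nat.dist_zero_left a

theorem injOn_edgeLabel_val_zero_mem :
    Set.InjOn (edgeLabel (Fin.val : Fin (N + 1) → ℕ)) {s | 0 ∈ s} := by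
  rintro _ ⟨a, rfl⟩ _ ⟨b, rfl⟩ hab
  rw [edgeLabel_val_zero_mk, edgeLabel_val_zero_mk] at hab
  rw [Fin.ext hab]

theorem injOn_edgeLabel_starCompletion {K : SimpleGraph (Fin (N + 1))}
    (hK : Set.InjOn (edgeLabel Fin.val) K.edgeSet) :
    Set.InjOn (edgeLabel Fin.val) (starCompletion K).edgeSet := by
  rw [edgeSet_starCompletion]
  rintro s (hs | ⟨⟨hs0, hs⟩, -⟩) t (ht | ⟨⟨ht0, ht⟩, -⟩) hst
  · exact hK hs ht hst
  · exact absurd ⟨s, hs, hst⟩ ht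
  · exact absurd ⟨t, ht, hst.symm⟩ hs
  · exact injOn_edgeLabel_val_zero_mem hs0 ht0 hst

theorem surjOn_edgeLabel_starCompletion (K : SimpleGraph (Fin (N + 1))) :
    Set.SurjOn (edgeLabel Fin.val) (starCompletion K).edgeSet (Set.Icc 1 N) := by
  rintro d ⟨hd_pos, hd_le⟩
  rw [edgeSet_starCompletion]
  by_cases hd : d ∈ edgeLabel Fin.val '' K.edgeSet
  · exact Set.image_mono Set.subset_union_left hd
  · lift d to Fin (N + 1) using Nat.lt_succ_of_le hd_le
    have hd_ne : 0 ≠ d := fun h => by simp [← h] at hd_pos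
    refine ⟨s(0, d), Or.inr ⟨⟨Sym2.mem_mk_left 0 d, ?_⟩, hd_ne⟩, edgeLabel_val_zero_mk d⟩
    rwa [edgeLabel_val_zero_mk]

theorem isGraceful_starCompletion {K : SimpleGraph (Fin (N + 1))}
    (hK : Set.InjOn (edgeLabel Fin.val) K.edgeSet) : IsGraceful (starCompletion K) :=
  have hle (a : Fin (N + 1)) : a.val ≤ N := a.is_le
  ⟨Fin.val, isGracefulLabeling_of_bijOn Fin.val_injective hle
    ⟨mapsTo_edgeLabel_Icc Fin.val_injective hle _, injOn_edgeLabel_starCompletion hK,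
      surjOn_edgeLabel_starCompletion K⟩⟩

theorem exists_isGraceful_embedding {G : SimpleGraph V} {φ : V → ℕ} (hφ : Function.Injective φ)
    (hpos : ∀ v, 0 < φ v) (hle : ∀ v, φ v ≤ N) (hlabel : Set.InjOn (edgeLabel φ) G.edgeSet) :
    ∃ H : SimpleGraph (Fin (N + 1)), IsGraceful H ∧ Nonempty (G ↪g H) := by
  let f : V ↪ Fin (N + 1) :=
    ⟨fun v => ⟨φ v, Nat.lt_succ_of_le (hle v)⟩, fun _ _ h => hφ (Fin.ext_iff.mp h)⟩
  have hf_ne (v : V) : f v ≠ 0 := Fin.ne_of_val_ne (hpos v).ne'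
  have hmap : Set.InjOn (edgeLabel Fin.val) (G.map f).edgeSet := by
    rw [SimpleGraph.edgeSet_map]
    refine Set.InjOn.image_of_comp ?_
    exact edgeLabel_comp Fin.val f ▸ hlabel
  have hadj {u v : V} : (starCompletion (G.map f)).Adj (f u) (f v) ↔ G.Adj u v :=
    (starCompletion_adj_iff _ (hf_ne u) (hf_ne v)).trans SimpleGraph.map_adj_apply
  exact ⟨starCompletion (G.map f), isGraceful_starCompletion hmap, ⟨⟨f, hadj⟩⟩⟩

end StarCompletion

section Pow

variable {b : ℕ}

theorem log_pow_succ_sub_pow {i j : ℕ} (hb : 1 < b) (hij : i ≤ j) :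
    Nat.log b (b ^ (j + 1) - b ^ i) = j := by
  have hi_pos : 0 < b ^ i := Nat.pow_pos (Nat.zero_lt_of_lt hb)
  have hi_le : b ^ i ≤ b ^ j := Nat.pow_le_pow_right (Nat.zero_lt_of_lt hb) hij
  have hj_le : b ^ j * 2 ≤ b ^ (j + 1) := Nat.mul_le_mul_left _ hb
  exact Nat.log_eq_of_pow_le_of_lt_pow (by omega) (by omega)

theorem pow_sub_pow_inj {i j k l : ℕ} (hb : 1 < b) (hij : i < j) (hkl : k < l)
    (h : b ^ j - b ^ i = b ^ l - b ^ k) : i = k ∧ j = l := by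
  have hjl : j = l := by
    obtain ⟨j, rfl⟩ := Nat.exists_eq_add_one_of_ne_zero hij.ne_bot
    obtain ⟨l, rfl⟩ := Nat.exists_eq_add_one_of_ne_zero hkl.ne_bot
    rw [← log_pow_succ_sub_pow hb (Nat.le_of_lt_succ hij), h,
      log_pow_succ_sub_pow hb (Nat.le_of_lt_succ hkl)]
  subst hjl
  have hi_le : b ^ i ≤ b ^ j := Nat.pow_le_pow_right (Nat.zero_lt_of_lt hb) hij.le
  have hk_le : b ^ k ≤ b ^ j := Nat.pow_le_pow_right (Nat.zero_lt_of_lt hb) hkl.le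
  have hpow : b ^ i = b ^ k := by omega
  exact ⟨Nat.pow_right_injective hb hpow, rfl⟩

theorem injOn_edgeLabel_pow (hb : 1 < b) :
    Set.InjOn (edgeLabel (b ^ ·)) (⊤ : SimpleGraph ℕ).edgeSet := by
  have hlt {s : Sym2 ℕ} (hs : s ∈ (⊤ : SimpleGraph ℕ).edgeSet) : s.inf < s.sup := by
    induction s with | _ i j
    exact inf_lt_sup.mpr hs
  have hmono : Monotone (b ^ · : ℕ → ℕ) := pow_right_mono₀ hb.le
  intro s hs t ht hst
  rw [edgeLabel_eq_sub_of_monotone hmono, edgeLabel_eq_sub_of_monotone hmono] at hst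
  exact Sym2.inf_eq_inf_and_sup_eq_sup.mp (pow_sub_pow_inj hb (hlt hs) (hlt ht) hst)

theorem injOn_edgeLabel_pow_comp {V : Type*} (hb : 1 < b) {f : V → ℕ}
    (hf : Function.Injective f) (G : SimpleGraph V) :
    Set.InjOn (edgeLabel fun v => b ^ f v) G.edgeSet := by
  have hmaps : Set.MapsTo (Sym2.map f) G.edgeSet (⊤ : SimpleGraph ℕ).edgeSet := by
    intro s hs
    induction s with | _ u v
    exact hf.ne (G.ne_of_adj hs)
  exact edgeLabel_comp (b ^ ·) f ▸ (injOn_edgeLabel_pow hb).comp (Sym2.map.injective hf).injOn hmaps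

end Pow

/-- Every finite simple graph can be embedded into a graceful graph
as an induced subgraph. -/
theorem embed_into_graceful_induced {V : Type*} [Fintype V] (G : SimpleGraph V) :
    ∃ (W : Type) (_ : Fintype W) (H : SimpleGraph W),
      IsGraceful H ∧ Nonempty (G ↪g H) := by
  let index (v : V) : ℕ := Fintype.equivFin V v
  have hindex : Function.Injective index :=
    Fin.val_injective.comp (Fintype.equivFin V).injective
  have hlabel : Set.InjOn (edgeLabel fun v => 2 ^ index v) G.edgeSet :=
    injOn_edgeLabel_pow_comp one_lt_two hindex G
  have hle (v : V) : 2 ^ index v ≤ 2 ^ Fintype.card V :=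
    Nat.pow_le_pow_right two_pos (Fintype.equivFin V v).is_le'
  obtain ⟨H, hH, hGH⟩ := exists_isGraceful_embedding
    ((Nat.pow_right_injective le_rfl).comp hindex) (fun v => Nat.two_pow_pos (index v)) hle hlabel
  exact ⟨_, inferInstance, H, hH, hGH⟩
end

section
/- If G is a supergraceful graph, then the join K_1 + G (the graph obtained from G by adding one new vertex adjacent to every vertex of G) is graceful. -/
/-- `φ` is a total labeling of the graph `G` with `p` vertices and `q` edges:
it is injective, the induced edge labels are pairwise distinct, no value is both
a vertex label and an edge label, and the vertex labels together with the edge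
labels form exactly the set `{1, 2, ..., p+q}`. -/
def IsTotalLabeling {V : Type*} (G : SimpleGraph V) (φ : V → ℕ) : Prop :=
  Function.Injective φ ∧
  Set.InjOn (edgeLabel φ) G.edgeSet ∧
  Disjoint (Set.range φ) (edgeLabel φ '' G.edgeSet) ∧
  Set.range φ ∪ edgeLabel φ '' G.edgeSet = Set.Icc 1 (Nat.card V + Nat.card G.edgeSet)

/-- A graph is supergraceful if it admits a total labeling. -/
def IsSupergraceful {V : Type*} (G : SimpleGraph V) : Prop :=
  ∃ φ : V → ℕ, IsTotalLabeling G φ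

/-- The join `K₁ + G`: a new vertex `none` adjacent to every vertex of `G`,
with `G` itself on the `some` vertices. -/
def addApex {V : Type*} (G : SimpleGraph V) : SimpleGraph (Option V) :=
  SimpleGraph.fromRel (fun x y =>
    x = none ∨ ∃ u v, x = some u ∧ y = some v ∧ G.Adj u v)

/-!
Give the new vertex the label `0` and keep a total labeling `φ` on `G`. The edge from the new vertex
to `v` then has label `φ v`, so the vertex and edge labels of `φ` together become the edge labels of
`K₁ + G`. There are `p + q` of them, which is also the number of edges of the join.
-/

theorem IsGracefulLabeling.of_image_eq_Icc {V : Type*} {G : SimpleGraph V} {φ : V → ℕ} {n : ℕ}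
    (hφ : Function.Injective φ) (hle : ∀ v, φ v ≤ n) (hinj : Set.InjOn (edgeLabel φ) G.edgeSet)
    (himage : edgeLabel φ '' G.edgeSet = Set.Icc 1 n) : IsGracefulLabeling G φ := by
  have hcard : Nat.card G.edgeSet = n := by
    rw [← Nat.card_image_of_injOn hinj, himage]
    simp
  exact ⟨hφ, by rwa [hcard], hinj, by rwa [hcard]⟩

theorem edgeLabel_map {V W : Type*} (φ : W → ℕ) (f : V → W) (e : Sym2 V) :
    edgeLabel φ (e.map f) = edgeLabel (φ ∘ f) e := by
  induction e with | _ u v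
  rfl

section Apex

variable {V : Type*} {G : SimpleGraph V} {φ : V → ℕ}

theorem addApex_adj_none_some (v : V) : (addApex G).Adj none (some v) := by
  simp [addApex]

theorem addApex_adj_some_some {u v : V} : (addApex G).Adj (some u) (some v) ↔ G.Adj u v := by
  simpa [addApex, G.adj_comm v u] using fun h : G.Adj u v => h.ne

theorem edgeSet_addApex (G : SimpleGraph V) :
    (addApex G).edgeSet = Set.range (fun v => s(none, some v)) ∪ Sym2.map some '' G.edgeSet := by
  ext e
  induction e with | _ x y
  rcases x with _ | u <;> rcases y with _ | v
  · simp [Sym2.forall]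
  · simp [addApex_adj_none_some]
  · simp [addApex_adj_none_some, (addApex G).adj_comm (some u)]
  · rw [← Sym2.map_mk, Set.mem_union, (Sym2.map.injective (Option.some_injective V)).mem_set_image]
    simp [addApex_adj_some_some]

/-- The labeling of the join `K₁ + G` that extends the labeling `φ` of `G` by giving the new vertex
`none` the label `0`. -/
def apexLabel (φ : V → ℕ) (x : Option V) : ℕ :=
  x.elim 0 φ

theorem apexLabel_injective_iff :
    Function.Injective (apexLabel φ) ↔ Function.Injective φ ∧ 0 ∉ Set.range φ :=
  Option.injective_iff

theorem forall_apexLabel_le_iff {n : ℕ} : (∀ x, apexLabel φ x ≤ n) ↔ ∀ v, φ v ≤ n := by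
  simp [apexLabel, Option.forall]

theorem edgeLabel_apexLabel_none_some (φ : V → ℕ) (v : V) :
    edgeLabel (apexLabel φ) s(none, some v) = φ v :=
  Nat.dist_zero_left (φ v)

theorem edgeLabel_apexLabel_map_some (φ : V → ℕ) (e : Sym2 V) :
    edgeLabel (apexLabel φ) (e.map some) = edgeLabel φ e :=
  edgeLabel_map (apexLabel φ) some e

theorem image_edgeLabel_apexLabel_edgeSet (G : SimpleGraph V) (φ : V → ℕ) :
    edgeLabel (apexLabel φ) '' (addApex G).edgeSet = Set.range φ ∪ edgeLabel φ '' G.edgeSet := by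
  simp only [edgeSet_addApex, Set.image_union, ← Set.range_comp, Function.comp_def, Set.image_image,
    edgeLabel_apexLabel_none_some, edgeLabel_apexLabel_map_some]

theorem injOn_edgeLabel_apexLabel (hφ : Function.Injective φ)
    (hinj : Set.InjOn (edgeLabel φ) G.edgeSet)
    (hdisj : Disjoint (Set.range φ) (edgeLabel φ '' G.edgeSet)) :
    Set.InjOn (edgeLabel (apexLabel φ)) (addApex G).edgeSet := by
  rw [edgeSet_addApex]
  rintro _ (⟨v, rfl⟩ | ⟨e, he, rfl⟩) _ (⟨w, rfl⟩ | ⟨f, hf, rfl⟩) heq <;>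
    simp only [edgeLabel_apexLabel_none_some, edgeLabel_apexLabel_map_some] at heq
  · rw [hφ heq]
  · exact (hdisj.ne_of_mem ⟨v, rfl⟩ ⟨f, hf, rfl⟩ heq).elim
  · exact (hdisj.ne_of_mem ⟨w, rfl⟩ ⟨e, he, rfl⟩ heq.symm).elim
  · rw [hinj he hf heq]

theorem IsTotalLabeling.isGracefulLabeling_apexLabel (h : IsTotalLabeling G φ) :
    IsGracefulLabeling (addApex G) (apexLabel φ) := by
  obtain ⟨hφ, hinj, hdisj, hunion⟩ := h
  have hrange : Set.range φ ⊆ Set.Icc 1 (Nat.card V + Nat.card G.edgeSet) :=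
    hunion ▸ Set.subset_union_left
  have hzero : 0 ∉ Set.range φ := fun h0 => Nat.not_succ_le_zero 0 (hrange h0).1
  exact .of_image_eq_Icc (apexLabel_injective_iff.2 ⟨hφ, hzero⟩)
    (forall_apexLabel_le_iff.2 fun v => (hrange ⟨v, rfl⟩).2)
    (injOn_edgeLabel_apexLabel hφ hinj hdisj)
    ((image_edgeLabel_apexLabel_edgeSet G φ).trans hunion)

end Apex

/-- If `G` is supergraceful, then the join `K₁ + G` is graceful. -/
theorem join_one_graceful_of_supergraceful {V : Type*} [Fintype V]
    (G : SimpleGraph V) (h : IsSupergraceful G) :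
    IsGraceful (addApex G) := by
  obtain ⟨φ, hφ⟩ := h
  exact ⟨apexLabel φ, hφ.isGracefulLabeling_apexLabel⟩
end

section
/- For every p ≥ 4, the complete graph K_p is not supergraceful (it admits no total labeling). -/
/-!
Adjoining the mark `0` to the vertex labels of a total labeling of `K_p` yields a ruler on which
every distance from `1` to `N = p + q` is measured exactly once. Such a ruler has length at most
`6`. Indeed, suppose `7 ≤ N`. The distance `N - k` can only be measured from a mark `i ≤ k`.
For `k = 1`, up to reflecting the ruler, this makes `1` a mark. Each distance measured so far
excludes further marks, so `k = 2` forces the mark `N - 2`, then `k = 4` forces the mark `4`, and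
no admissible pair of marks remains for `k = 5`.
-/

/-- A perfect ruler of length `N`, given by its set `A` of marks: each distance from `1` to `N` is
measured by exactly one pair of marks. Marks are integers so that subtraction is not truncated. -/
structure IsPerfectRuler (N : ℤ) (A : Set ℤ) : Prop where
  subset_Icc : A ⊆ Set.Icc 0 N
  existsUnique_sub_eq : ∀ d ∈ Set.Icc 1 N, ∃! q : ℤ × ℤ, q ∈ A ×ˢ A ∧ q.2 - q.1 = d

namespace IsPerfectRuler

variable {N : ℤ} {A : Set ℤ}

lemma eq_of_sub_eq_sub (hA : IsPerfectRuler N A) {a b c d : ℤ} (ha : a ∈ A) (hb : b ∈ A)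
    (hc : c ∈ A) (hd : d ∈ A) (hab : a < b) (h : b - a = d - c) : a = c := by
  have ha₀ := (hA.subset_Icc ha).1
  have hbN := (hA.subset_Icc hb).2
  have hq := (hA.existsUnique_sub_eq (b - a) ⟨by omega, by omega⟩).unique
    (y₁ := (a, b)) (y₂ := (c, d)) ⟨⟨ha, hb⟩, rfl⟩ ⟨⟨hc, hd⟩, h.symm⟩
  exact congrArg Prod.fst hq

lemma exists_mem_sub_add_mem (hA : IsPerfectRuler N A) {k : ℤ} (hk : 0 ≤ k) (hkN : k < N) :
    ∃ i ∈ Set.Icc 0 k, i ∈ A ∧ N - k + i ∈ A := by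
  obtain ⟨⟨i, j⟩, ⟨⟨hi, hj⟩, hij⟩, -⟩ :=
    hA.existsUnique_sub_eq (N - k) ⟨by omega, by omega⟩
  simp only at hi hj hij
  have hi₀ := (hA.subset_Icc hi).1
  have hjN := (hA.subset_Icc hj).2
  obtain rfl : j = N - k + i := by omega
  exact ⟨i, ⟨hi₀, by omega⟩, hi, hj⟩

lemma zero_mem_and_length_mem (hA : IsPerfectRuler N A) (hN : 0 < N) : 0 ∈ A ∧ N ∈ A := by
  obtain ⟨i, ⟨hi₀, hi₁⟩, hi, hi'⟩ := hA.exists_mem_sub_add_mem le_rfl hN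
  obtain rfl : i = 0 := le_antisymm hi₁ hi₀
  exact ⟨hi, by simpa using hi'⟩

lemma reflect (hA : IsPerfectRuler N A) : IsPerfectRuler N ((N - ·) ⁻¹' A) where
  subset_Icc a ha := by
    obtain ⟨h₀, hN⟩ := hA.subset_Icc ha
    exact ⟨(sub_le_self_iff N).1 hN, sub_nonneg.1 h₀⟩
  existsUnique_sub_eq d hd := by
    obtain ⟨⟨a, b⟩, ⟨⟨ha, hb⟩, hab⟩, huniq⟩ := hA.existsUnique_sub_eq d hd
    refine ⟨(N - b, N - a), ⟨⟨by simpa using hb, by simpa using ha⟩, by simpa using hab⟩, ?_⟩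
    rintro ⟨a', b'⟩ ⟨⟨ha', hb'⟩, hab'⟩
    have hq := huniq (N - b', N - a') ⟨⟨hb', ha'⟩, by simpa using hab'⟩
    simp only [Prod.mk.injEq] at hq ⊢
    omega

lemma two_notMem_of_one_mem (hA : IsPerfectRuler N A) (hN : 0 < N) (h1 : 1 ∈ A) : 2 ∉ A := by
  intro h2
  have h0 := (hA.zero_mem_and_length_mem hN).1
  have := hA.eq_of_sub_eq_sub h0 h1 h1 h2 (by omega) (by omega)
  omega

lemma sub_one_notMem_of_one_mem (hA : IsPerfectRuler N A) (hN : 1 < N) (h1 : 1 ∈ A) :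
    N - 1 ∉ A := by
  intro h
  obtain ⟨h0, hNA⟩ := hA.zero_mem_and_length_mem (by omega)
  have := hA.eq_of_sub_eq_sub h0 h1 h hNA (by omega) (by omega)
  omega

lemma sub_two_mem_of_one_mem (hA : IsPerfectRuler N A) (hN : 2 < N) (h1 : 1 ∈ A) : N - 2 ∈ A := by
  obtain ⟨i, ⟨hi₀, hi₂⟩, hi, hi'⟩ := hA.exists_mem_sub_add_mem (k := 2) (by omega) hN
  interval_cases i
  · simpa using hi'
  · exact absurd (by convert hi' using 1; ring) (hA.sub_one_notMem_of_one_mem (by omega) h1)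
  · exact absurd hi (hA.two_notMem_of_one_mem (by omega) h1)

lemma three_notMem_of_one_mem (hA : IsPerfectRuler N A) (hN : 3 < N) (h1 : 1 ∈ A) : 3 ∉ A := by
  intro h3
  have hNA := (hA.zero_mem_and_length_mem (by omega)).2
  have hN2 := hA.sub_two_mem_of_one_mem (by omega) h1
  have := hA.eq_of_sub_eq_sub h1 h3 hN2 hNA (by omega) (by omega)
  omega

lemma sub_four_notMem_of_one_mem (hA : IsPerfectRuler N A) (hN : 2 < N) (h1 : 1 ∈ A) :
    N - 4 ∉ A := by
  intro hN4
  have hNA := (hA.zero_mem_and_length_mem (by omega)).2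
  have hN2 := hA.sub_two_mem_of_one_mem (by omega) h1
  have := hA.eq_of_sub_eq_sub hN4 hN2 hN2 hNA (by omega) (by omega)
  omega

lemma four_mem_of_one_mem (hA : IsPerfectRuler N A) (hN : 4 < N) (h1 : 1 ∈ A) : 4 ∈ A := by
  have h0 := (hA.zero_mem_and_length_mem (by omega)).1
  have hN2 := hA.sub_two_mem_of_one_mem (by omega) h1
  have hN3 : N - 3 ∉ A := fun hN3 => by
    have := hA.eq_of_sub_eq_sub h0 h1 hN3 hN2 (by omega) (by omega)
    omega
  obtain ⟨i, ⟨hi₀, hi₄⟩, hi, hi'⟩ := hA.exists_mem_sub_add_mem (k := 4) (by omega) hN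
  interval_cases i
  · exact absurd (by simpa using hi') (hA.sub_four_notMem_of_one_mem (by omega) h1)
  · exact absurd (by convert hi' using 1; ring) hN3
  · exact absurd hi (hA.two_notMem_of_one_mem (by omega) h1)
  · exact absurd hi (hA.three_notMem_of_one_mem (by omega) h1)
  · exact hi

lemma one_notMem (hA : IsPerfectRuler N A) (hN : 6 < N) : 1 ∉ A := by
  intro h1
  have h0 := (hA.zero_mem_and_length_mem (by omega)).1
  have hN2 := hA.sub_two_mem_of_one_mem (by omega) h1
  have h4 := hA.four_mem_of_one_mem (by omega) h1
  have h5 : 5 ∉ A := fun h5 => by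
    have := hA.eq_of_sub_eq_sub h0 h1 h4 h5 (by omega) (by omega)
    omega
  have hN5 : N - 5 ∉ A := fun hN5 => by
    have := hA.eq_of_sub_eq_sub h1 h4 hN5 hN2 (by omega) (by omega)
    omega
  obtain ⟨i, ⟨hi₀, hi₅⟩, hi, hi'⟩ := hA.exists_mem_sub_add_mem (k := 5) (by omega) (by omega)
  interval_cases i
  · exact hN5 (by simpa using hi')
  · exact hA.sub_four_notMem_of_one_mem (by omega) h1 (by convert hi' using 1; ring)
  · exact hA.two_notMem_of_one_mem (by omega) h1 hi
  · exact hA.three_notMem_of_one_mem (by omega) h1 hi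
  · exact hA.sub_one_notMem_of_one_mem (by omega) h1 (by convert hi' using 1; ring)
  · exact h5 hi

theorem length_le_six (hA : IsPerfectRuler N A) : N ≤ 6 := by
  by_contra! hN
  obtain ⟨i, ⟨hi₀, hi₁⟩, hi, hi'⟩ := hA.exists_mem_sub_add_mem (k := 1) (by omega) (by omega)
  interval_cases i
  · exact hA.reflect.one_notMem hN (by simpa using hi')
  · exact hA.one_notMem hN hi

end IsPerfectRuler

lemma edgeLabel_mk_of_le {V : Type*} {φ : V → ℕ} {u v : V} (h : φ u ≤ φ v) :
    edgeLabel φ s(u, v) = φ v - φ u :=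
  Nat.dist_eq_sub_of_le h

/-- The ruler marks of a vertex labeling `φ`: its labels together with an extra mark `0`. From the
mark `0` the vertex labels are measured as distances, on a par with the edge labels. -/
def labelMarks {V : Type*} (φ : V → ℕ) : Set ℤ :=
  insert 0 (Set.range fun v => (φ v : ℤ))

lemma nonneg_of_mem_labelMarks {V : Type*} {φ : V → ℕ} {a : ℤ} (ha : a ∈ labelMarks φ) :
    0 ≤ a := by
  rcases ha with rfl | ⟨v, rfl⟩
  exacts [le_rfl, Int.natCast_nonneg _]

namespace IsTotalLabeling

variable {V : Type*} {G : SimpleGraph V} {φ : V → ℕ}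

lemma mem_Icc (hφ : IsTotalLabeling G φ) (v : V) :
    φ v ∈ Set.Icc 1 (Nat.card V + Nat.card G.edgeSet) :=
  hφ.2.2.2 ▸ Or.inl ⟨v, rfl⟩

lemma add_ne (hφ : IsTotalLabeling G φ) {u v : V} (huv : G.Adj u v) (w : V) :
    φ u + φ w ≠ φ v := fun h =>
  Set.disjoint_left.1 hφ.2.2.1 ⟨w, rfl⟩
    ⟨s(u, v), huv, by rw [edgeLabel_mk_of_le (by omega)]; omega⟩

lemma eq_and_eq_of_add_eq_add (hφ : IsTotalLabeling G φ) {u v w x : V} (huv : G.Adj u v)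
    (hwx : G.Adj w x) (hlt : φ u < φ v) (h : φ v + φ w = φ x + φ u) : u = w ∧ v = x := by
  have hedge : s(u, v) = s(w, x) := hφ.2.1 huv hwx <| by
    rw [edgeLabel_mk_of_le hlt.le, edgeLabel_mk_of_le (by omega)]
    omega
  rcases Sym2.eq_iff.1 hedge with heq | ⟨rfl, rfl⟩
  · exact heq
  · omega

lemma exists_eq_or_exists_adj_add_eq (hφ : IsTotalLabeling G φ) {d : ℕ}
    (hd : d ∈ Set.Icc 1 (Nat.card V + Nat.card G.edgeSet)) :
    (∃ v, φ v = d) ∨ ∃ u v, G.Adj u v ∧ φ u + d = φ v := by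
  rw [← hφ.2.2.2] at hd
  refine hd.imp_right ?_
  rintro ⟨e, he, rfl⟩
  induction e using Sym2.ind with
  | _ u v =>
    rcases le_total (φ u) (φ v) with h | h
    · exact ⟨u, v, he, by rw [edgeLabel_mk_of_le h]; omega⟩
    · exact ⟨v, u, SimpleGraph.Adj.symm he, by rw [Sym2.eq_swap, edgeLabel_mk_of_le h]; omega⟩

lemma eq_of_sub_eq_sub (hφ : IsTotalLabeling (⊤ : SimpleGraph V) φ) {a b : ℤ} {v x : V}
    (ha : a ∈ labelMarks φ) (hb : b ∈ labelMarks φ) (hlt : a < φ v) (h : φ v - a = φ x - b) :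
    a = b := by
  have adj {u v : V} (h : φ u < φ v) : (⊤ : SimpleGraph V).Adj u v := ne_of_apply_ne φ h.ne
  have hlt' : b < φ x := by omega
  rcases ha with rfl | ⟨u, rfl⟩ <;> rcases hb with rfl | ⟨w, rfl⟩
  · rfl
  · exact absurd (by grind) (hφ.add_ne (adj (Int.ofNat_lt.1 hlt')) v)
  · exact absurd (by grind) (hφ.add_ne (adj (Int.ofNat_lt.1 hlt)) x)
  · have huv := Int.ofNat_lt.1 hlt
    have hwx := Int.ofNat_lt.1 hlt'
    rw [(hφ.eq_and_eq_of_add_eq_add (adj huv) (adj hwx) huv (by grind)).1]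

theorem isPerfectRuler (hφ : IsTotalLabeling (⊤ : SimpleGraph V) φ) :
    IsPerfectRuler ↑(Nat.card V + Nat.card (⊤ : SimpleGraph V).edgeSet) (labelMarks φ) where
  subset_Icc := by
    intro a ha
    refine ⟨nonneg_of_mem_labelMarks ha, ?_⟩
    rcases ha with rfl | ⟨v, rfl⟩
    exacts [Int.natCast_nonneg _, Int.ofNat_le.2 (hφ.mem_Icc v).2]
  existsUnique_sub_eq d hd := by
    lift d to ℕ using zero_le_one.trans hd.1
    have hd₁ : 1 ≤ d := Int.ofNat_le.1 hd.1
    refine existsUnique_of_exists_of_unique ?_ ?_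
    · rcases hφ.exists_eq_or_exists_adj_add_eq ⟨hd₁, Int.ofNat_le.1 hd.2⟩ with
        ⟨v, hv⟩ | ⟨u, v, -, huv⟩
      · exact ⟨(0, φ v), ⟨.inl rfl, .inr ⟨v, rfl⟩⟩, by simp [hv]⟩
      · exact ⟨(φ u, φ v), ⟨.inr ⟨u, rfl⟩, .inr ⟨v, rfl⟩⟩, by simp [← huv]⟩
    · have right_mem {a b : ℤ} (ha : a ∈ labelMarks φ) (hb : b ∈ labelMarks φ)
          (hab : b - a = d) : ∃ v, (φ v : ℤ) = b :=
        hb.resolve_left (by have := nonneg_of_mem_labelMarks ha; omega)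
      rintro ⟨a, b⟩ ⟨a', b'⟩ ⟨⟨ha, hb⟩, hab⟩ ⟨⟨ha', hb'⟩, hab'⟩
      obtain ⟨v, rfl⟩ := right_mem ha hb hab
      obtain ⟨x, rfl⟩ := right_mem ha' hb' hab'
      have haa' : a = a' := hφ.eq_of_sub_eq_sub (v := v) (x := x) ha ha' (by grind) (by grind)
      exact Prod.ext haa' (by grind)

end IsTotalLabeling

theorem completeGraph_not_supergraceful_general {V : Type*} (hV : 4 ≤ Nat.card V) :
    ¬ IsSupergraceful (⊤ : SimpleGraph V) := by
  rintro ⟨φ, hφ⟩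
  have hlength : Nat.card V + Nat.card (⊤ : SimpleGraph V).edgeSet ≤ 6 := by
    exact_mod_cast hφ.isPerfectRuler.length_le_six
  have : Finite V := Nat.finite_of_card_ne_zero (by omega)
  have : Fintype V := .ofFinite V
  classical
  have hedges : (Nat.card V).choose 2 = Nat.card (⊤ : SimpleGraph V).edgeSet := by
    rw [Nat.card_eq_fintype_card, Nat.card_eq_fintype_card, ← SimpleGraph.edgeFinset_card,
      SimpleGraph.card_edgeFinset_top_eq_card_choose_two]
  have hchoose : Nat.choose 4 2 ≤ (Nat.card V).choose 2 := Nat.choose_le_choose 2 hV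
  have : Nat.choose 4 2 = 6 := rfl
  omega

/-- For every `p ≥ 4`, the complete graph `K_p` is not supergraceful. -/
theorem completeGraph_not_supergraceful (p : ℕ) (hp : 4 ≤ p) :
    ¬ IsSupergraceful (⊤ : SimpleGraph (Fin p)) :=
  completeGraph_not_supergraceful_general (by simpa using hp)
end

section
/- For every even integer n ≥ 8 there exists a connected graph on n vertices with n + 1 edges that admits no prime labeling, and for every odd integer n ≥ 9 there exists a connected graph on n vertices with n + 2 edges that admits no prime labeling. Hence the minimum number of edges μ(n) of a connected non-prime graph of order n satisfies μ(n) ≤ n + 1 for even n ≥ 8 and μ(n) ≤ n + 2 for odd n ≥ 9. -/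
/-- `α` is a prime labeling of the graph `G` of order `n`: a bijection from the
vertex set onto `{1, 2, ..., n}` such that the labels of adjacent vertices are coprime. -/
def IsPrimeLabeling {V : Type*} (G : SimpleGraph V) (α : V → ℕ) : Prop :=
  Function.Injective α ∧
  Set.range α = Set.Icc 1 (Nat.card V) ∧
  ∀ u v, G.Adj u v → Nat.Coprime (α u) (α v)

/-- A graph is prime if it admits a prime labeling. -/
def IsPrimeGraph {V : Type*} (G : SimpleGraph V) : Prop :=
  ∃ α : V → ℕ, IsPrimeLabeling G α

/-!
The vertices carrying even labels are pairwise non-adjacent, so a prime graph of order `n` has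
independence number at least `n / 2`, whereas a graph covered by `m` cliques has independence
number at most `m`. Take a path on `n` vertices and turn its first `k + 1` consecutive vertex
triples into triangles, at the cost of one extra edge each: this gives `(n - 1) + (k + 1) = n + k`
edges. Covering the remaining vertices by path edges, and the last one by itself if necessary, uses
`⌊(n - k) / 2⌋` cliques in all, which is less than `⌊n / 2⌋` if `k ≥ 2`, or `k = 1` and `n` is even.
-/

section PrimeLabeling

variable {V : Type*} {G : SimpleGraph V} {α : V → ℕ}

theorem IsPrimeLabeling.finite (hα : IsPrimeLabeling G α) : Finite V :=
  Set.finite_range_iff hα.1 |>.mp <| hα.2.1 ▸ Set.finite_Icc 1 (Nat.card V)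

theorem IsPrimeLabeling.isIndepSet_setOf_dvd (hα : IsPrimeLabeling G α) {d : ℕ} (hd : d ≠ 1) :
    G.IsIndepSet {v | d ∣ α v} := fun u hu v hv _ hadj =>
  hd <| Nat.eq_one_of_dvd_coprimes (hα.2.2 u v hadj) hu hv

theorem IsPrimeLabeling.ncard_setOf_dvd (hα : IsPrimeLabeling G α) (d : ℕ) :
    {v | d ∣ α v}.ncard = Nat.card V / d := by
  obtain ⟨hinj, hrange, -⟩ := hα
  have himage : α '' {v | d ∣ α v} = ↑({x ∈ Finset.Ioc 0 (Nat.card V) | d ∣ x}) := by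
    calc α '' (α ⁻¹' {x | d ∣ x}) = {x | d ∣ x} ∩ Set.range α := Set.image_preimage_eq_inter_range
      _ = ↑({x ∈ Finset.Ioc 0 (Nat.card V) | d ∣ x}) := by
        rw [hrange]
        ext x
        simp [Nat.succ_le_iff, and_comm]
  rw [← Set.ncard_image_of_injective _ hinj, himage, Set.ncard_coe_finset,
    Nat.Ioc_filter_dvd_card_eq_div]

theorem IsPrimeGraph.card_div_two_le_indepNum (hG : IsPrimeGraph G) :
    Nat.card V / 2 ≤ G.indepNum := by
  obtain ⟨α, hα⟩ := hG
  have := hα.finite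
  have hindep := hα.isIndepSet_setOf_dvd (d := 2) (by decide)
  rw [← (Set.toFinite {v | 2 ∣ α v}).coe_toFinset] at hindep
  calc Nat.card V / 2 = {v | 2 ∣ α v}.ncard := (hα.ncard_setOf_dvd 2).symm
    _ = (Set.toFinite {v | 2 ∣ α v}).toFinset.card := Set.ncard_eq_toFinset_card _
    _ ≤ G.indepNum := hindep.card_le_indepNum

theorem indepNum_le_of_colorable_compl {m : ℕ} (h : Gᶜ.Colorable m) : G.indepNum ≤ m :=
  csSup_le' fun _ ⟨_, hs⟩ =>
    hs.card_eq ▸ (G.isClique_compl.mpr hs.isIndepSet).card_le_of_colorable h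

theorem not_isPrimeGraph_of_colorable_compl {m : ℕ} (h : Gᶜ.Colorable m)
    (hm : m < Nat.card V / 2) : ¬ IsPrimeGraph G := fun hG =>
  (hG.card_div_two_le_indepNum.trans (indepNum_le_of_colorable_compl h)).not_gt hm

end PrimeLabeling

theorem card_edgeSet_pathGraph_succ (n : ℕ) :
    Nat.card (SimpleGraph.pathGraph (n + 1)).edgeSet = n := by
  have hrange : (SimpleGraph.pathGraph (n + 1)).edgeSet =
      Set.range fun i : Fin n => s(i.castSucc, i.succ) := by
    ext e
    induction e with | _ u v
    simp only [SimpleGraph.mem_edgeSet, SimpleGraph.pathGraph_adj, Set.mem_range, Sym2.eq_iff,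
      Fin.ext_iff, Fin.val_castSucc, Fin.val_succ]
    constructor
    · rintro (huv | hvu)
      · exact ⟨⟨u, by omega⟩, .inl ⟨rfl, huv⟩⟩
      · exact ⟨⟨v, by omega⟩, .inr ⟨rfl, hvu⟩⟩
    · rintro ⟨i, ⟨hu, hv⟩ | ⟨hv, hu⟩⟩ <;> omega
  have hinj : Function.Injective fun i : Fin n => s(i.castSucc, i.succ) := by
    intro i j h
    simp only [Sym2.eq_iff, Fin.ext_iff, Fin.val_castSucc, Fin.val_succ] at h ⊢
    omega
  rw [hrange, Nat.card_range_of_injective hinj, Nat.card_fin]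

theorem card_edgeSet_sup_of_disjoint {V : Type*} [Finite V] {G H : SimpleGraph V}
    (h : Disjoint G H) :
    Nat.card ↑(G ⊔ H).edgeSet = Nat.card G.edgeSet + Nat.card H.edgeSet := by
  simp only [Nat.card_coe_set_eq, SimpleGraph.edgeSet_sup]
  exact Set.ncard_union_eq (SimpleGraph.disjoint_edgeSet.mpr h)

section TrianglePath

variable {n t : ℕ} (h : 3 * t ≤ n)

/-- The edge joining the outer two of the vertices `3 * i`, `3 * i + 1`, `3 * i + 2`, which closes
this stretch of the path `0, 1, …, n - 1` to a triangle. -/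
def chord (i : Fin t) : Sym2 (Fin n) :=
  s(⟨3 * i, by omega⟩, ⟨3 * i + 2, by omega⟩)

/-- The path `0, 1, …, n - 1` whose first `t` consecutive triples of vertices are completed to
triangles. -/
def trianglePath : SimpleGraph (Fin n) :=
  SimpleGraph.pathGraph n ⊔ SimpleGraph.fromEdgeSet (Set.range (chord h))

theorem chord_injective : Function.Injective (chord h) := by
  intro i j hij
  simp only [chord, Sym2.eq_iff, Fin.ext_iff] at hij ⊢
  omega

theorem not_isDiag_chord (i : Fin t) : ¬ (chord h i).IsDiag := by
  simp [chord]

theorem chord_notMem_edgeSet_pathGraph (i : Fin t) :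
    chord h i ∉ (SimpleGraph.pathGraph n).edgeSet := by
  simp only [chord, SimpleGraph.mem_edgeSet, SimpleGraph.pathGraph_adj]
  omega

theorem pathGraph_le_trianglePath : SimpleGraph.pathGraph n ≤ trianglePath h := le_sup_left

theorem trianglePath_adj_of_add_two {u v : Fin n} (hu : 3 ∣ u.val) (huv : u.val + 2 = v)
    (hv : v < 3 * t) : (trianglePath h).Adj u v := by
  obtain ⟨i, hi⟩ := hu
  refine Or.inr ⟨⟨⟨i, by omega⟩, ?_⟩, by omega⟩
  simp [chord, Fin.ext_iff, ← huv, hi]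

theorem connected_trianglePath (hn : n ≠ 0) : (trianglePath h).Connected := by
  obtain ⟨m, rfl⟩ := Nat.exists_eq_succ_of_ne_zero hn
  exact (SimpleGraph.pathGraph_connected m).mono (pathGraph_le_trianglePath h)

theorem card_edgeSet_trianglePath (hn : n ≠ 0) :
    Nat.card (trianglePath h).edgeSet = n - 1 + t := by
  have hchords : (SimpleGraph.fromEdgeSet (Set.range (chord h))).edgeSet = Set.range (chord h) := by
    rw [SimpleGraph.edgeSet_fromEdgeSet, sdiff_eq_left, Set.disjoint_left]
    exact Set.forall_mem_range.mpr (not_isDiag_chord h)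
  have hdisjoint : Disjoint (SimpleGraph.pathGraph n)
      (SimpleGraph.fromEdgeSet (Set.range (chord h))) := by
    rw [SimpleGraph.disjoint_fromEdgeSet, Set.disjoint_right]
    exact Set.forall_mem_range.mpr (chord_notMem_edgeSet_pathGraph h)
  obtain ⟨m, rfl⟩ := Nat.exists_eq_succ_of_ne_zero hn
  rw [trianglePath, card_edgeSet_sup_of_disjoint hdisjoint, card_edgeSet_pathGraph_succ, hchords,
    Nat.card_range_of_injective (chord_injective h), Nat.card_fin, Nat.succ_sub_one]

theorem colorable_compl_trianglePath : (trianglePath h)ᶜ.Colorable ((n - t + 1) / 2) := by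
  -- `(v - t) / 2 = t + (v - 3 * t) / 2`: beyond the triangles, the blocks `t, t + 1, …` are pairs.
  let block (v : Fin n) : ℕ := if v.val < 3 * t then v / 3 else (v - t) / 2
  have hblock (v : Fin n) : block v < (n - t + 1) / 2 := by
    grind
  have hclique {u v : Fin n} (huv : u < v) (heq : block u = block v) :
      (trianglePath h).Adj u v := by
    have hcases : u.val + 1 = v ∨ 3 ∣ u.val ∧ u.val + 2 = v ∧ v < 3 * t := by
      grind
    obtain hsucc | ⟨hu, hadd, hv⟩ := hcases
    · exact pathGraph_le_trianglePath h (SimpleGraph.pathGraph_adj.mpr (.inl hsucc))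
    · exact trianglePath_adj_of_add_two h hu hadd hv
  refine ⟨SimpleGraph.Coloring.mk (fun v => ⟨block v, hblock v⟩) fun {u v} hadj heq => ?_⟩
  have heq : block u = block v := congrArg Fin.val heq
  obtain ⟨hne, hnadj⟩ := ((trianglePath h).compl_adj u v).mp hadj
  obtain huv | hvu := hne.lt_or_gt
  · exact hnadj (hclique huv heq)
  · exact hnadj (hclique hvu heq.symm).symm

end TrianglePath

theorem nonprime_connected_few_edges_general {n k : ℕ} (hk : n % 2 < k) (hn : 3 * (k + 1) ≤ n) :
    ∃ G : SimpleGraph (Fin n), G.Connected ∧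
      Nat.card G.edgeSet = n + k ∧ ¬ IsPrimeGraph G := by
  have hn0 : n ≠ 0 := by omega
  refine ⟨trianglePath hn, connected_trianglePath hn hn0, ?_,
    not_isPrimeGraph_of_colorable_compl (colorable_compl_trianglePath hn) ?_⟩
  · rw [card_edgeSet_trianglePath hn hn0]
    omega
  · rw [Nat.card_fin]
    omega

/-- For every even `n ≥ 8` there is a connected non-prime graph on `n`
vertices with `n + 1` edges, and for every odd `n ≥ 9` there is a connected non-prime
graph on `n` vertices with `n + 2` edges; hence `μ(n) ≤ n + 1` for even `n ≥ 8` and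
`μ(n) ≤ n + 2` for odd `n ≥ 9`. -/
theorem nonprime_connected_few_edges (n : ℕ) :
    (8 ≤ n → Even n →
      ∃ G : SimpleGraph (Fin n), G.Connected ∧
        Nat.card G.edgeSet = n + 1 ∧ ¬ IsPrimeGraph G) ∧
    (9 ≤ n → Odd n →
      ∃ G : SimpleGraph (Fin n), G.Connected ∧
        Nat.card G.edgeSet = n + 2 ∧ ¬ IsPrimeGraph G) := by
  refine ⟨fun hn heven => ?_, fun hn _ => ?_⟩
  · exact nonprime_connected_few_edges_general (by grind) (by omega)
  · exact nonprime_connected_few_edges_general (by omega) (by omega)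
end
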